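/- arXiv:2107.02325 — 2 statements merged into one kernel-verified Lean document; each statement's English description precedes it below -/
import Mathlib

section
/- Let f be a ternary cubic form over ℂ. Then f is completely reducible (i.e. f = a·b·c for some linear forms a, b, c) if and only if there exists a constant t ∈ ℂ such that the Hessian determinant det(∂ᵢ∂ⱼ f) of f equals t·f. -/
open MvPolynomial

/-- The Hessian determinant `det (∂ᵢ∂ⱼ f)` of a ternary form. -/
noncomputable def hessianDet (f : MvPolynomial (Fin 3) ℂ) : MvPolynomial (Fin 3) ℂ :=
  Matrix.det (Matrix.of fun i j : Fin 3 => pderiv i (pderiv j f))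

/-- A linear form is a homogeneous polynomial of degree 1. -/
def IsLinearForm (a : MvPolynomial (Fin 3) ℂ) : Prop := a.IsHomogeneous 1

/-- A cubic form is completely reducible if it is a product of three linear forms. -/
def CompletelyReducible (f : MvPolynomial (Fin 3) ℂ) : Prop :=
  ∃ a b c : MvPolynomial (Fin 3) ℂ,
    IsLinearForm a ∧ IsLinearForm b ∧ IsLinearForm c ∧ f = a * b * c

/-!
For a linear form `l` with gradient `λ` and a quadratic form `q` with Hessian matrix `M`,
`Hess (l q) = 4 det M · l³ - 2 (λᵀ adj(M) λ) · l q`. If `q` is a product of linear forms then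
`det M = 0`, so `Hess (l q)` is a multiple of `l q`. Conversely, if `Hess (l q) = t l q`, cancelling
`l` shows that either `q` is a multiple of `l²` or `det M = 0`; in the second case `q` depends on
two variables only, so it splits.

It remains to find a linear factor of a cubic `f` with `Hess f = t f`. At a smooth zero `p` the
Hessian matrix is singular; let `u ≠ 0` be in its kernel. Comparing the equation `Hess f = t f`
along `p + s u` in degrees `1` and `3` in `s` gives `f(u) = 0`, and then `f` vanishes on the plane
spanned by `p` and `u`. At a singular zero `p`, either `p` is the vertex of a cone, and then `f`
splits, or some line through `p` meets the cubic in a further, smooth point.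
-/

open Matrix

section Homogeneous

variable {σ R K : Type*}

attribute [local instance] MvPolynomial.gradedAlgebra in
lemma exists_isHomogeneous_eq_mul_of_dvd [CommSemiring R] {f g : MvPolynomial σ R} {m n : ℕ}
    (hg : g.IsHomogeneous m) (hf : f.IsHomogeneous (m + n)) (hdvd : g ∣ f) :
    ∃ h : MvPolynomial σ R, h.IsHomogeneous n ∧ f = g * h := by
  obtain ⟨h, rfl⟩ := hdvd
  refine ⟨homogeneousComponent n h, homogeneousComponent_isHomogeneous n h, ?_⟩
  calc g * h = homogeneousComponent (m + n) (g * h) := (homogeneousComponent_eq_self hf).symm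
    _ = g * homogeneousComponent n h := by
      rw [← decomposition.decompose'_apply, ← decomposition.decompose'_apply]
      exact DirectSum.coe_decompose_mul_add_of_left_mem (homogeneousSubmodule σ R) hg

lemma eval_smul_of_isHomogeneous [CommSemiring R] {f : MvPolynomial σ R} {n : ℕ}
    (hf : f.IsHomogeneous n) (s : R) (v : σ → R) : eval (s • v) f = s ^ n * eval v f := by
  simp only [eval_eq, Pi.smul_apply, smul_eq_mul, mul_pow, Finset.prod_mul_distrib,
    Finset.prod_pow_eq_pow_sum, Finset.mul_sum]
  refine Finset.sum_congr rfl fun d hd => ?_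
  rw [hf.degree_eq_sum_deg_support hd]
  ring

lemma eq_C_of_isHomogeneous_zero [CommSemiring R] {f : MvPolynomial σ R} (hf : f.IsHomogeneous 0) :
    f = C (coeff 0 f) :=
  totalDegree_eq_zero_iff_eq_C.mp (Nat.le_zero.mp hf.totalDegree_le)

lemma eval_eq_eval_of_isHomogeneous_zero [CommSemiring R] {f : MvPolynomial σ R}
    (hf : f.IsHomogeneous 0) (u v : σ → R) : eval u f = eval v f := by
  rw [eq_C_of_isHomogeneous_zero hf, eval_C, eval_C]

lemma irreducible_of_isHomogeneous_one [Field K] {l : MvPolynomial σ K}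
    (hl : l.IsHomogeneous 1) (hl0 : l ≠ 0) : Irreducible l := by
  refine irreducible_of_totalDegree_eq_one (hl.totalDegree hl0) fun x hx => ?_
  obtain ⟨d, hd⟩ := ne_zero_iff.mp hl0
  exact (ne_zero_of_dvd_ne_zero hd (hx d)).isUnit

lemma dvd_of_irreducible_of_forall_eval_eq_zero [Finite σ] [Field K] [IsAlgClosed K]
    {f g : MvPolynomial σ K} (hg : Irreducible g)
    (hvanish : ∀ v, eval v g = 0 → eval v f = 0) : g ∣ f := by
  have hprime : (Ideal.span {g}).IsPrime := (Ideal.span_singleton_prime hg.ne_zero).mpr hg.prime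
  rw [← Ideal.mem_span_singleton, ← IsPrime.vanishingIdeal_zeroLocus (K := K) (Ideal.span {g})]
  intro v hv
  exact hvanish v (hv g (Ideal.mem_span_singleton_self g))

end Homogeneous

section Derivatives

variable {σ R : Type*} [CommRing R]

lemma pderiv_pderiv_comm (i j : σ) (f : MvPolynomial σ R) :
    pderiv i (pderiv j f) = pderiv j (pderiv i f) := by
  classical
  have hbracket : ⁅pderiv (R := R) i, pderiv (R := R) j⁆ = 0 := by
    refine derivation_ext fun k => ?_
    simp [Derivation.commutator_apply, pderiv_X, Pi.single_apply, apply_ite (pderiv _)]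
  rw [← sub_eq_zero, ← Derivation.commutator_apply, hbracket, Derivation.zero_apply]

/-- The Hessian matrix of a polynomial, with polynomial entries. -/
noncomputable def hessian (f : MvPolynomial σ R) : Matrix σ σ (MvPolynomial σ R) :=
  Matrix.of fun i j => pderiv i (pderiv j f)

/-- The gradient of `f` at the point `v`. -/
noncomputable def gradientAt (f : MvPolynomial σ R) (v : σ → R) : σ → R :=
  fun i => eval v (pderiv i f)

/-- The Hessian matrix of `f` at the point `v`. -/
noncomputable def hessianAt (f : MvPolynomial σ R) (v : σ → R) : Matrix σ σ R :=
  (hessian f).map (eval v)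

lemma hessianAt_apply (f : MvPolynomial σ R) (v : σ → R) (i j : σ) :
    hessianAt f v i j = eval v (pderiv i (pderiv j f)) :=
  rfl

lemma hessianAt_isSymm (f : MvPolynomial σ R) (v : σ → R) : (hessianAt f v).IsSymm :=
  Matrix.IsSymm.ext fun i j => by rw [hessianAt_apply, hessianAt_apply, pderiv_pderiv_comm]

lemma gradientAt_eq_of_isHomogeneous_one {l : MvPolynomial σ R} (hl : l.IsHomogeneous 1)
    (u v : σ → R) : gradientAt l u = gradientAt l v :=
  _root_.funext fun _ => eval_eq_eval_of_isHomogeneous_zero hl.pderiv u v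

lemma hessianAt_eq_zero_of_isHomogeneous_one {l : MvPolynomial σ R} (hl : l.IsHomogeneous 1)
    (v : σ → R) : hessianAt l v = 0 := by
  ext i j
  have hconst : (pderiv j l).IsHomogeneous 0 := hl.pderiv
  rw [hessianAt_apply, eq_C_of_isHomogeneous_zero hconst, pderiv_C, map_zero, Matrix.zero_apply]

lemma hessianAt_eq_of_isHomogeneous_two {q : MvPolynomial σ R} (hq : q.IsHomogeneous 2)
    (u v : σ → R) : hessianAt q u = hessianAt q v :=
  Matrix.ext fun _ _ => eval_eq_eval_of_isHomogeneous_zero hq.pderiv.pderiv u v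

lemma hessianAt_mul_of_isHomogeneous_one {l : MvPolynomial σ R} (hl : l.IsHomogeneous 1)
    (g : MvPolynomial σ R) (v : σ → R) :
    hessianAt (l * g) v = eval v l • hessianAt g v + vecMulVec (gradientAt l v) (gradientAt g v)
      + vecMulVec (gradientAt g v) (gradientAt l v) := by
  ext i j
  have hll : eval v (pderiv i (pderiv j l)) = 0 :=
    congrFun₂ (hessianAt_eq_zero_of_isHomogeneous_one hl v) i j
  simp only [hessianAt_apply, gradientAt, pderiv_mul, map_add, map_mul, hll, Matrix.add_apply,
    Matrix.smul_apply, vecMulVec_apply, smul_eq_mul]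
  ring

variable [Fintype σ]

lemma det_hessianAt [DecidableEq σ] (f : MvPolynomial σ R) (v : σ → R) :
    (hessianAt f v).det = eval v (hessian f).det :=
  ((eval v).map_det (hessian f)).symm

lemma dotProduct_gradientAt_self {f : MvPolynomial σ R} {n : ℕ} (hf : f.IsHomogeneous n)
    (v : σ → R) : v ⬝ᵥ gradientAt f v = n * eval v f := by
  simpa [dotProduct, gradientAt] using congrArg (eval v) hf.sum_X_mul_pderiv

lemma hessianAt_mulVec_self {f : MvPolynomial σ R} {n : ℕ} (hf : f.IsHomogeneous (n + 1))
    (v : σ → R) : hessianAt f v *ᵥ v = (n : R) • gradientAt f v := by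
  ext i
  have hi := dotProduct_gradientAt_self (hf.pderiv (i := i)) v
  rw [mulVec, dotProduct_comm]
  simpa [gradientAt, dotProduct, hessianAt_apply, pderiv_pderiv_comm i] using hi

lemma dotProduct_hessianAt_mulVec_self {f : MvPolynomial σ R} {n : ℕ}
    (hf : f.IsHomogeneous (n + 1)) (v : σ → R) :
    v ⬝ᵥ hessianAt f v *ᵥ v = (n + 1) * n * eval v f := by
  rw [hessianAt_mulVec_self hf, dotProduct_smul, dotProduct_gradientAt_self hf, smul_eq_mul]
  push_cast
  ring

lemma eval_eq_dotProduct_gradientAt {l : MvPolynomial σ R} (hl : l.IsHomogeneous 1)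
    (u v : σ → R) : eval v l = v ⬝ᵥ gradientAt l u := by
  rw [gradientAt_eq_of_isHomogeneous_one hl u v, dotProduct_gradientAt_self hl, Nat.cast_one,
    one_mul]

lemma gradientAt_eq_mulVec {q : MvPolynomial σ R} (hq : q.IsHomogeneous 2)
    (u v : σ → R) : gradientAt q v = hessianAt q u *ᵥ v := by
  rw [hessianAt_eq_of_isHomogeneous_two hq u v, hessianAt_mulVec_self hq, Nat.cast_one, one_smul]

end Derivatives

lemma det_smul_add_vecMulVec_add_vecMulVec {R : Type*} [CommRing R]
    {M : Matrix (Fin 3) (Fin 3) R} (hM : M.IsSymm) (l x : Fin 3 → R) :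
    ((x ⬝ᵥ l) • M + vecMulVec l (M *ᵥ x) + vecMulVec (M *ᵥ x) l).det =
      4 * M.det * (x ⬝ᵥ l) ^ 3 - (l ⬝ᵥ M.adjugate *ᵥ l) * (x ⬝ᵥ M *ᵥ x) * (x ⬝ᵥ l) := by
  have h10 := hM.apply 0 1
  have h20 := hM.apply 0 2
  have h21 := hM.apply 1 2
  simp only [adjugate_fin_three, det_fin_three, Matrix.add_apply, Matrix.smul_apply,
    vecMulVec_apply, mulVec, dotProduct, Fin.sum_univ_three, smul_eq_mul, h10, h20, h21,
    of_apply, cons_val]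
  ring

lemma det_vecMulVec_add_vecMulVec_comm {R : Type*} [CommRing R] (l x : Fin 3 → R) :
    (vecMulVec l x + vecMulVec x l).det = 0 := by
  simp only [det_fin_three, Matrix.add_apply, vecMulVec_apply]
  ring

section LinearFactor

variable {σ R K : Type*} [CommSemiring R] [Field K]

/-- The restriction of a polynomial to the line `s ↦ u + s • w`, as a polynomial in `s`. -/
noncomputable def restrictLine (f : MvPolynomial σ R) (u w : σ → R) : Polynomial R :=
  aeval (fun i => Polynomial.C (u i) + Polynomial.C (w i) * Polynomial.X) f

lemma eval_restrictLine (f : MvPolynomial σ R) (u w : σ → R) (s : R) :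
    (restrictLine f u w).eval s = eval (u + s • w) f := by
  induction f using MvPolynomial.induction_on with
  | C a => simp [restrictLine]
  | add g h hg hh => simpa [restrictLine] using congrArg₂ (· + ·) hg hh
  | mul_X g i hg => simpa [restrictLine, mul_comm s] using congrArg (· * (u i + s * w i)) hg

lemma exists_eval_smul_add_smul_eq_zero [IsAlgClosed K] {f : MvPolynomial σ K} {n : ℕ}
    (hf : f.IsHomogeneous n) (hn : n ≠ 0) (u w : σ → K) :
    ∃ a b : K, (a ≠ 0 ∨ b ≠ 0) ∧ eval (a • u + b • w) f = 0 := by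
  by_cases hroot : ∃ s, (restrictLine f u w).eval s = 0
  · obtain ⟨s, hs⟩ := hroot
    exact ⟨1, s, Or.inl one_ne_zero, by rwa [one_smul, ← eval_restrictLine]⟩
  have hdegree : (restrictLine f u w).degree ≤ 0 := by
    by_contra! hpos
    exact hroot (IsAlgClosed.exists_root _ hpos.ne')
  obtain ⟨c, hc⟩ : ∃ c, restrictLine f u w = Polynomial.C c :=
    ⟨_, Polynomial.eq_C_of_degree_le_zero hdegree⟩
  -- If `f` is a nonzero constant `c` on `u + s • w`, then it is `c * s ^ n` on `w + s • u`.
  have hmonomial : Polynomial.X * restrictLine f w u =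
      Polynomial.X * (Polynomial.C c * Polynomial.X ^ n) := by
    refine Polynomial.funext fun s => ?_
    rcases eq_or_ne s 0 with rfl | hs
    · simp
    have hscale : w + s • u = s • (u + s⁻¹ • w) := by
      rw [smul_add, smul_inv_smul₀ hs, add_comm]
    simp only [Polynomial.eval_mul, Polynomial.eval_X, Polynomial.eval_C, Polynomial.eval_pow]
    rw [eval_restrictLine, hscale, eval_smul_of_isHomogeneous hf, ← eval_restrictLine, hc,
      Polynomial.eval_C, mul_comm c]
  have hw := eval_restrictLine f w u 0
  rw [mul_left_cancel₀ Polynomial.X_ne_zero hmonomial, zero_smul, add_zero] at hw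
  exact ⟨0, 1, Or.inr one_ne_zero, by simpa [hn] using hw.symm⟩

lemma exists_linearIndependent_eval_eq_zero [IsAlgClosed K] {f : MvPolynomial (Fin 3) K} {n : ℕ}
    (hf : f.IsHomogeneous n) (hn : n ≠ 0) {p : Fin 3 → K} (hp : p ≠ 0) :
    ∃ u : Fin 3 → K, LinearIndependent K ![p, u] ∧ eval u f = 0 := by
  obtain ⟨i, hi : p i ≠ 0⟩ := Function.ne_iff.mp hp
  obtain ⟨a, b, hab, hzero⟩ := exists_eval_smul_add_smul_eq_zero hf hn
    (Pi.single (i + 1) 1) (Pi.single (i + 2) 1)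
  set u : Fin 3 → K := a • Pi.single (i + 1) 1 + b • Pi.single (i + 2) 1 with hu
  have hu_i : u i = 0 := by fin_cases i <;> simp [hu]
  have hu_ne : u ≠ 0 := by
    refine fun h => hab.elim (fun ha => ha ?_) fun hb => hb ?_
    · simpa [hu] using congrFun h (i + 1)
    · simpa [hu] using congrFun h (i + 2)
  refine ⟨u, LinearIndependent.pair_iff.mpr fun r s hrs => ?_, hzero⟩
  have hr : r = 0 := by simpa [hu_i, hi] using congrFun hrs i
  exact ⟨hr, by simpa [hr, hu_ne] using hrs⟩

/-- Divisibility by a nonzero linear form. The zero polynomial is not excluded. -/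
def HasLinearFactor (f : MvPolynomial σ R) : Prop :=
  ∃ l : MvPolynomial σ R, l.IsHomogeneous 1 ∧ l ≠ 0 ∧ l ∣ f

lemma exists_smul_add_smul_eq_of_dotProduct_cross_eq_zero {p u v : Fin 3 → K}
    (hpu : LinearIndependent K ![p, u]) (hv : v ⬝ᵥ p ⨯₃ u = 0) :
    ∃ a b : K, a • p + b • u = v := by
  rw [triple_product_eq_det] at hv
  obtain ⟨c, hc, hrel⟩ := exists_vecMul_eq_zero_iff.mpr hv
  replace hrel : c 0 • v + (c 1 • p + c 2 • u) = 0 := by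
    rw [← hrel]
    ext i
    simp [vecMul, dotProduct, Fin.sum_univ_three, add_assoc]
  have hc0 : c 0 ≠ 0 := by
    intro h0
    rw [h0, zero_smul, zero_add] at hrel
    obtain ⟨h1, h2⟩ := LinearIndependent.pair_iff.mp hpu _ _ hrel
    exact hc (by ext i; fin_cases i <;> assumption)
  have hv' : c 0 • v = -(c 1 • p + c 2 • u) := eq_neg_of_add_eq_zero_left hrel
  refine ⟨-((c 0)⁻¹ * c 1), -((c 0)⁻¹ * c 2), ?_⟩
  rw [← inv_smul_smul₀ hc0 v, hv']
  module

lemma hasLinearFactor_of_forall_eval_eq_zero [IsAlgClosed K] {f : MvPolynomial (Fin 3) K}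
    {p u : Fin 3 → K} (hpu : LinearIndependent K ![p, u])
    (hvanish : ∀ a b : K, eval (a • p + b • u) f = 0) : HasLinearFactor f := by
  set c := p ⨯₃ u
  let l : MvPolynomial (Fin 3) K := ∑ i, C (c i) * X i
  have heval (v : Fin 3 → K) : eval v l = v ⬝ᵥ c := by
    simp [l, dotProduct, mul_comm]
  have hl : l.IsHomogeneous 1 :=
    IsHomogeneous.sum _ _ _ fun i _ => isHomogeneous_C_mul_X (c i) i
  have hl0 : l ≠ 0 := by
    intro h
    apply crossProduct_ne_zero_iff_linearIndependent.mpr hpu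
    ext i
    simpa [h] using (heval (Pi.single i 1)).symm
  refine ⟨l, hl, hl0, dvd_of_irreducible_of_forall_eval_eq_zero
    (irreducible_of_isHomogeneous_one hl hl0) fun v hv => ?_⟩
  obtain ⟨a, b, rfl⟩ := exists_smul_add_smul_eq_of_dotProduct_cross_eq_zero hpu
    ((heval v).symm.trans hv)
  exact hvanish a b

lemma hasLinearFactor_of_forall_eval_add_smul_eq [IsAlgClosed K] {f : MvPolynomial (Fin 3) K}
    {n : ℕ} (hf : f.IsHomogeneous n) (hn : n ≠ 0) {p : Fin 3 → K} (hp : p ≠ 0)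
    (hcone : ∀ (v : Fin 3 → K) (s : K), eval (v + s • p) f = eval v f) : HasLinearFactor f := by
  obtain ⟨u, hpu, hu⟩ := exists_linearIndependent_eval_eq_zero hf hn hp
  refine hasLinearFactor_of_forall_eval_eq_zero hpu fun a b => ?_
  rw [add_comm, hcone, eval_smul_of_isHomogeneous hf, hu, mul_zero]

end LinearFactor

section CubicPolar

variable {σ R : Type*} [Fintype σ] [CommRing R] {f : MvPolynomial σ R}

/-- The trilinear form `(u, v, w) ↦ vᵀ H(u) w`, where `H(u)` is the Hessian matrix of `f` at `u`.
For a cubic form it is symmetric, and it is the complete polarization of `6 f`. -/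
noncomputable def cubicPolar (f : MvPolynomial σ R) (u v w : σ → R) : R :=
  v ⬝ᵥ hessianAt f u *ᵥ w

lemma cubicPolar_right_comm (f : MvPolynomial σ R) (u v w : σ → R) :
    cubicPolar f u v w = cubicPolar f u w v := by
  rw [cubicPolar, dotProduct_mulVec, ← mulVec_transpose, (hessianAt_isSymm f u).eq,
    dotProduct_comm, cubicPolar]

lemma hessianAt_mulVec_comm (hf : f.IsHomogeneous 3) (u v : σ → R) :
    hessianAt f u *ᵥ v = hessianAt f v *ᵥ u := by
  ext i
  have hrow (x : σ → R) : hessianAt f x i = hessianAt (pderiv i f) 0 *ᵥ x := by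
    rw [← gradientAt_eq_mulVec hf.pderiv]
    ext j
    exact congrArg (eval x) (pderiv_pderiv_comm i j f)
  calc (hessianAt f u *ᵥ v) i
      = v ⬝ᵥ hessianAt (pderiv i f) 0 *ᵥ u := by rw [mulVec, hrow, dotProduct_comm]
    _ = u ⬝ᵥ hessianAt (pderiv i f) 0 *ᵥ v := cubicPolar_right_comm (pderiv i f) 0 v u
    _ = (hessianAt f v *ᵥ u) i := by rw [mulVec, hrow, dotProduct_comm]

lemma cubicPolar_left_comm (hf : f.IsHomogeneous 3) (u v w : σ → R) :
    cubicPolar f u v w = cubicPolar f v u w := by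
  rw [cubicPolar_right_comm, cubicPolar, hessianAt_mulVec_comm hf, ← cubicPolar,
    cubicPolar_right_comm]

lemma cubicPolar_smul_add_smul_right (f : MvPolynomial σ R) (u v w x : σ → R) (a b : R) :
    cubicPolar f u v (a • w + b • x) = a * cubicPolar f u v w + b * cubicPolar f u v x := by
  simp only [cubicPolar, mulVec_add, mulVec_smul, dotProduct_add, dotProduct_smul, smul_eq_mul]

lemma cubicPolar_smul_add_smul_middle (f : MvPolynomial σ R) (u v w x : σ → R) (a b : R) :
    cubicPolar f u (a • v + b • w) x = a * cubicPolar f u v x + b * cubicPolar f u w x := by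
  simp only [cubicPolar, add_dotProduct, smul_dotProduct, smul_eq_mul]

lemma cubicPolar_smul_add_smul_left (hf : f.IsHomogeneous 3) (u v w x : σ → R) (a b : R) :
    cubicPolar f (a • u + b • v) w x = a * cubicPolar f u w x + b * cubicPolar f v w x := by
  simp only [cubicPolar_left_comm hf _ w, cubicPolar_smul_add_smul_middle]

lemma cubicPolar_self (hf : f.IsHomogeneous 3) (v : σ → R) :
    cubicPolar f v v v = 6 * eval v f := by
  rw [cubicPolar, dotProduct_hessianAt_mulVec_self hf]
  norm_num

lemma cubicPolar_self_right (hf : f.IsHomogeneous 3) (v w : σ → R) :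
    cubicPolar f v w v = 2 * (w ⬝ᵥ gradientAt f v) := by
  rw [cubicPolar, hessianAt_mulVec_self hf, dotProduct_smul, smul_eq_mul, Nat.cast_ofNat]

lemma cubicPolar_eq_zero_of_gradientAt_eq_zero (hf : f.IsHomogeneous 3) {p : σ → R}
    (hgrad : gradientAt f p = 0) (v : σ → R) : cubicPolar f v p p = 0 := by
  rw [cubicPolar_left_comm hf, cubicPolar_self_right hf, hgrad, dotProduct_zero, mul_zero]

lemma six_mul_eval_smul_add_smul (hf : f.IsHomogeneous 3) (u v : σ → R) (a b : R) :
    6 * eval (a • u + b • v) f = a ^ 3 * (6 * eval u f) + 3 * a ^ 2 * b * cubicPolar f u u v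
      + 3 * a * b ^ 2 * cubicPolar f u v v + b ^ 3 * (6 * eval v f) := by
  simp only [← cubicPolar_self hf, cubicPolar_smul_add_smul_left hf,
    cubicPolar_smul_add_smul_middle, cubicPolar_smul_add_smul_right, cubicPolar_left_comm hf v u,
    cubicPolar_right_comm f u v u, cubicPolar_right_comm f v v u]
  ring

lemma six_mul_eval_add_smul_of_gradientAt_eq_zero (hf : f.IsHomogeneous 3) {p : σ → R}
    (hgrad : gradientAt f p = 0) (v : σ → R) (s : R) :
    6 * eval (v + s • p) f = 6 * eval v f + 3 * s * cubicPolar f v v p := by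
  have hpp := cubicPolar_eq_zero_of_gradientAt_eq_zero hf hgrad
  simpa [hpp, ← cubicPolar_self hf p] using six_mul_eval_smul_add_smul hf v p 1 s

lemma cubicPolar_add_smul_self_of_gradientAt_eq_zero (hf : f.IsHomogeneous 3) {p : σ → R}
    (hgrad : gradientAt f p = 0) (v : σ → R) (s : R) :
    cubicPolar f (v + s • p) p (v + s • p) = cubicPolar f v p v := by
  have hpp := cubicPolar_eq_zero_of_gradientAt_eq_zero hf hgrad
  have hleft := cubicPolar_smul_add_smul_left hf v p p (v + s • p) 1 s
  have hright := cubicPolar_smul_add_smul_right f v p v p 1 s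
  simp only [one_smul, one_mul] at hleft hright
  rw [hleft, hright, hpp, cubicPolar_right_comm f p, cubicPolar_left_comm hf p, hpp]
  ring

lemma det_cubicPolar [DecidableEq σ] (f : MvPolynomial σ R) (b : σ → σ → R) (v : σ → R) :
    (Matrix.of fun i j => cubicPolar f v (b i) (b j)).det =
      (Matrix.of b).det ^ 2 * (hessianAt f v).det := by
  have hcongr : (Matrix.of fun i j => cubicPolar f v (b i) (b j)) =
      Matrix.of b * hessianAt f v * (Matrix.of b)ᵀ := by
    ext i j
    rw [Matrix.mul_assoc]
    rfl
  rw [hcongr, det_mul, det_mul, det_transpose]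
  ring

lemma cubicPolar_eq_zero_of_hessianAt_mulVec_eq_zero {p u : σ → R}
    (hu : hessianAt f p *ᵥ u = 0) (x : σ → R) : cubicPolar f p x u = 0 := by
  rw [cubicPolar, hu, dotProduct_zero]

lemma six_mul_eval_smul_add_smul_of_hessianAt_mulVec_eq_zero (hf : f.IsHomogeneous 3)
    {p u : σ → R} (hu : hessianAt f p *ᵥ u = 0) (a b : R) :
    6 * eval (a • p + b • u) f = 6 * (a ^ 3 * eval p f + b ^ 3 * eval u f) := by
  rw [six_mul_eval_smul_add_smul hf, cubicPolar_eq_zero_of_hessianAt_mulVec_eq_zero hu,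
    cubicPolar_eq_zero_of_hessianAt_mulVec_eq_zero hu]
  ring

-- In the basis `p, u, w` the Hessian matrix at `p + s • u` has rows
-- `(0, 0, α)`, `(0, 6 s f(u), *)`, `(α, *, *)`, with `α = cubicPolar f p w p`.
lemma det_sq_mul_det_hessianAt_add_smul {f : MvPolynomial (Fin 3) R} (hf : f.IsHomogeneous 3)
    {p u : Fin 3 → R} (hp : eval p f = 0) (hu : hessianAt f p *ᵥ u = 0) (w : Fin 3 → R) (s : R) :
    (Matrix.of ![p, u, w]).det ^ 2 * (hessianAt f (p + s • u)).det =
      -(cubicPolar f p w p ^ 2 * (s * (6 * eval u f))) := by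
  have hppp : cubicPolar f p p p = 0 := by rw [cubicPolar_self hf, hp, mul_zero]
  have hpxu := cubicPolar_eq_zero_of_hessianAt_mulVec_eq_zero hu
  have hpux (x : Fin 3 → R) : cubicPolar f p u x = 0 := by rw [cubicPolar_right_comm, hpxu]
  have hupx (x : Fin 3 → R) : cubicPolar f u p x = 0 := by rw [cubicPolar_left_comm hf, hpux]
  have huxp (x : Fin 3 → R) : cubicPolar f u x p = 0 := by rw [cubicPolar_right_comm, hupx]
  have hleft (x y : Fin 3 → R) :
      cubicPolar f (p + s • u) x y = cubicPolar f p x y + s * cubicPolar f u x y := by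
    simpa only [one_smul, one_mul] using cubicPolar_smul_add_smul_left hf p u x y 1 s
  rw [← det_cubicPolar, det_fin_three]
  simp only [of_apply, cons_val, hleft, hppp, hpxu, hpux, hupx, huxp, cubicPolar_self hf u,
    cubicPolar_right_comm f p p w]
  ring

end CubicPolar

section LinearMulQuadratic

variable {R : Type*} [CommRing R] {l q : MvPolynomial (Fin 3) R}

lemma det_hessianAt_linear_mul_quadratic (hl : l.IsHomogeneous 1) (hq : q.IsHomogeneous 2)
    (v : Fin 3 → R) :
    (hessianAt (l * q) v).det = 4 * (hessianAt q 0).det * eval v l ^ 3 -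
      2 * (gradientAt l 0 ⬝ᵥ (hessianAt q 0).adjugate *ᵥ gradientAt l 0) *
        (eval v l * eval v q) := by
  have hEuler : v ⬝ᵥ hessianAt q 0 *ᵥ v = 2 * eval v q := by
    rw [← gradientAt_eq_mulVec hq, dotProduct_gradientAt_self hq, Nat.cast_ofNat]
  rw [hessianAt_mul_of_isHomogeneous_one hl, hessianAt_eq_of_isHomogeneous_two hq v 0,
    gradientAt_eq_mulVec hq 0 v, gradientAt_eq_of_isHomogeneous_one hl v 0,
    eval_eq_dotProduct_gradientAt hl 0 v,
    det_smul_add_vecMulVec_add_vecMulVec (hessianAt_isSymm q 0), hEuler]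
  ring

lemma det_hessian_linear_mul_quadratic [IsDomain R] [Infinite R] (hl : l.IsHomogeneous 1)
    (hq : q.IsHomogeneous 2) :
    (hessian (l * q)).det = C (4 * (hessianAt q 0).det) * l ^ 3 -
      C (2 * (gradientAt l 0 ⬝ᵥ (hessianAt q 0).adjugate *ᵥ gradientAt l 0)) * (l * q) := by
  refine MvPolynomial.funext fun v => ?_
  rw [← det_hessianAt, det_hessianAt_linear_mul_quadratic hl hq]
  simp only [map_sub, map_mul, map_pow, eval_C]

lemma det_hessianAt_mul_of_isHomogeneous_one {a b : MvPolynomial (Fin 3) R}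
    (ha : a.IsHomogeneous 1) (hb : b.IsHomogeneous 1) (v : Fin 3 → R) :
    (hessianAt (a * b) v).det = 0 := by
  rw [hessianAt_mul_of_isHomogeneous_one ha, hessianAt_eq_zero_of_isHomogeneous_one hb, smul_zero,
    zero_add, det_vecMulVec_add_vecMulVec_comm]

lemma exists_det_hessian_eq_of_isHomogeneous_one [IsDomain R] [Infinite R]
    {a b c : MvPolynomial (Fin 3) R} (ha : a.IsHomogeneous 1) (hb : b.IsHomogeneous 1)
    (hc : c.IsHomogeneous 1) : ∃ t : R, (hessian (a * b * c)).det = C t * (a * b * c) := by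
  refine ⟨-(2 * (gradientAt a 0 ⬝ᵥ (hessianAt (b * c) 0).adjugate *ᵥ gradientAt a 0)), ?_⟩
  rw [mul_assoc, det_hessian_linear_mul_quadratic ha (hb.mul hc),
    det_hessianAt_mul_of_isHomogeneous_one hb hc, mul_zero, C_0, zero_mul, zero_sub, C_neg,
    neg_mul]

end LinearMulQuadratic

section HessianMultiple

variable {K : Type*} [Field K]

lemma two_ne_zero_of_neZero_six [NeZero (6 : K)] : (2 : K) ≠ 0 := by
  intro h
  apply NeZero.ne (6 : K)
  linear_combination 3 * h

-- Along the line `p + s • u` the Hessian determinant is linear in `s`, while `f` is `s ^ 3 * f(u)`.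
lemma eval_eq_zero_of_hessianAt_mulVec_eq_zero [NeZero (6 : K)] {f : MvPolynomial (Fin 3) K}
    (hf : f.IsHomogeneous 3) {t : K} (ht : ∀ v, (hessianAt f v).det = t * eval v f)
    {p u : Fin 3 → K} (hp : eval p f = 0) (hgrad : gradientAt f p ≠ 0)
    (hu : hessianAt f p *ᵥ u = 0) : eval u f = 0 := by
  obtain ⟨i, hi : gradientAt f p i ≠ 0⟩ := Function.ne_iff.mp hgrad
  set w : Fin 3 → K := Pi.single i 1
  have hpwp : cubicPolar f p w p ≠ 0 := by
    rw [cubicPolar_self_right hf, single_one_dotProduct]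
    exact mul_ne_zero two_ne_zero_of_neZero_six hi
  have hrestrict (s : K) : 6 * eval (p + s • u) f = 6 * (s ^ 3 * eval u f) := by
    simpa [hp] using six_mul_eval_smul_add_smul_of_hessianAt_mulVec_eq_zero hf hu 1 s
  have hline (s : K) : (Matrix.of ![p, u, w]).det ^ 2 * (t * (6 * (s ^ 3 * eval u f))) =
      -(cubicPolar f p w p ^ 2 * (s * (6 * (6 * eval u f)))) := by
    have hdet := det_sq_mul_det_hessianAt_add_smul hf hp hu w s
    rw [ht] at hdet
    rw [← hrestrict]
    linear_combination 6 * hdet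
  have hcube : cubicPolar f p w p ^ 2 * (6 * (6 * (6 * eval u f))) = 0 := by
    linear_combination 8 * hline 1 - hline 2
  simpa [hpwp, NeZero.ne (6 : K)] using hcube

-- A line through the double point `p` outside the tangent cone there meets the cubic once more.
lemma exists_smooth_zero_of_cubicPolar_ne_zero [NeZero (6 : K)] {σ : Type*} [Fintype σ]
    {f : MvPolynomial σ K} (hf : f.IsHomogeneous 3) {p v : σ → K} (hgrad : gradientAt f p = 0)
    (hv : cubicPolar f v v p ≠ 0) : ∃ x, eval x f = 0 ∧ gradientAt f x ≠ 0 := by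
  set s : K := -(2 * eval v f) / cubicPolar f v v p
  refine ⟨v + s • p, ?_, fun hgradx => hv ?_⟩
  · apply mul_left_cancel₀ (NeZero.ne (6 : K))
    rw [six_mul_eval_add_smul_of_gradientAt_eq_zero hf hgrad, mul_assoc, div_mul_cancel₀ _ hv]
    ring
  · rw [cubicPolar_right_comm, ← cubicPolar_add_smul_self_of_gradientAt_eq_zero hf hgrad v s,
      cubicPolar_self_right hf, hgradx, dotProduct_zero, mul_zero]

variable [IsAlgClosed K]

lemma hasLinearFactor_of_det_hessianAt_eq_zero [NeZero (2 : K)] {q : MvPolynomial (Fin 3) K}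
    (hq : q.IsHomogeneous 2) (hdet : (hessianAt q 0).det = 0) : HasLinearFactor q := by
  obtain ⟨p, hp, hker⟩ := exists_mulVec_eq_zero_iff.mpr hdet
  have hEuler (v : Fin 3 → K) : 2 * eval v q = v ⬝ᵥ gradientAt q v :=
    (dotProduct_gradientAt_self hq v).symm
  refine hasLinearFactor_of_forall_eval_add_smul_eq hq two_ne_zero hp fun v s => ?_
  have hgrad : gradientAt q (v + s • p) = gradientAt q v := by
    rw [gradientAt_eq_mulVec hq 0, gradientAt_eq_mulVec hq 0, mulVec_add, mulVec_smul, hker,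
      smul_zero, add_zero]
  have horth : p ⬝ᵥ gradientAt q v = 0 := by
    rw [gradientAt_eq_mulVec hq 0, dotProduct_mulVec, ← mulVec_transpose,
      (hessianAt_isSymm q 0).eq, hker, zero_dotProduct]
  apply mul_left_cancel₀ (two_ne_zero (α := K))
  rw [hEuler, hEuler, hgrad, add_dotProduct, smul_dotProduct, horth, smul_zero, add_zero]

lemma exists_eq_mul_of_det_hessianAt_eq_zero [NeZero (2 : K)] {q : MvPolynomial (Fin 3) K}
    (hq : q.IsHomogeneous 2) (hdet : (hessianAt q 0).det = 0) :
    ∃ b c : MvPolynomial (Fin 3) K, b.IsHomogeneous 1 ∧ c.IsHomogeneous 1 ∧ q = b * c := by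
  obtain ⟨b, hb, -, hdvd⟩ := hasLinearFactor_of_det_hessianAt_eq_zero hq hdet
  obtain ⟨c, hc, hbc⟩ := exists_isHomogeneous_eq_mul_of_dvd (n := 1) hb hq hdvd
  exact ⟨b, c, hb, hc, hbc⟩

variable [NeZero (6 : K)] {f : MvPolynomial (Fin 3) K}

lemma hasLinearFactor_of_smooth_zero (hf : f.IsHomogeneous 3) {t : K}
    (ht : ∀ v, (hessianAt f v).det = t * eval v f) {p : Fin 3 → K} (hp : eval p f = 0)
    (hgrad : gradientAt f p ≠ 0) : HasLinearFactor f := by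
  have hdet : (hessianAt f p).det = 0 := by rw [ht, hp, mul_zero]
  obtain ⟨u, hu0, hu⟩ := exists_mulVec_eq_zero_iff.mpr hdet
  have hfu : eval u f = 0 := eval_eq_zero_of_hessianAt_mulVec_eq_zero hf ht hp hgrad hu
  have hpu : LinearIndependent K ![p, u] := by
    refine LinearIndependent.pair_iff.mpr fun r s hrs => ?_
    have hr : r = 0 := by
      have hmul := congrArg (hessianAt f p *ᵥ ·) hrs
      simpa [mulVec_add, mulVec_smul, hu, hessianAt_mulVec_self hf, hgrad,
        two_ne_zero_of_neZero_six] using hmul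
    exact ⟨hr, by simpa [hr, hu0] using hrs⟩
  refine hasLinearFactor_of_forall_eval_eq_zero hpu fun a b => ?_
  have hspan := six_mul_eval_smul_add_smul_of_hessianAt_mulVec_eq_zero hf hu a b
  rw [hp, hfu, mul_zero, mul_zero, add_zero, mul_zero] at hspan
  exact (mul_eq_zero.mp hspan).resolve_left (NeZero.ne 6)

lemma hasLinearFactor_of_singular_zero (hf : f.IsHomogeneous 3) {t : K}
    (ht : ∀ v, (hessianAt f v).det = t * eval v f) {p : Fin 3 → K} (hp : p ≠ 0)
    (hgrad : gradientAt f p = 0) : HasLinearFactor f := by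
  by_cases hcone : ∀ v, cubicPolar f v v p = 0
  · refine hasLinearFactor_of_forall_eval_add_smul_eq hf three_ne_zero hp fun v s => ?_
    apply mul_left_cancel₀ (NeZero.ne (6 : K))
    rw [six_mul_eval_add_smul_of_gradientAt_eq_zero hf hgrad, hcone, mul_zero, add_zero]
  · push Not at hcone
    obtain ⟨v, hv⟩ := hcone
    obtain ⟨x, hx, hgradx⟩ := exists_smooth_zero_of_cubicPolar_ne_zero hf hgrad hv
    exact hasLinearFactor_of_smooth_zero hf ht hx hgradx

lemma hasLinearFactor_of_det_hessian_eq (hf : f.IsHomogeneous 3) {t : K}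
    (ht : (hessian f).det = C t * f) : HasLinearFactor f := by
  have ht_eval (v : Fin 3 → K) : (hessianAt f v).det = t * eval v f := by
    rw [det_hessianAt, ht, map_mul, eval_C]
  obtain ⟨p, hp_indep, hp⟩ :=
    exists_linearIndependent_eval_eq_zero hf three_ne_zero (one_ne_zero (α := Fin 3 → K))
  by_cases hgrad : gradientAt f p = 0
  · exact hasLinearFactor_of_singular_zero hf ht_eval (hp_indep.ne_zero 1) hgrad
  · exact hasLinearFactor_of_smooth_zero hf ht_eval hp hgrad

lemma exists_eq_mul_mul_of_det_hessian_eq (hf : f.IsHomogeneous 3) {t : K}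
    (ht : (hessian f).det = C t * f) :
    ∃ a b c : MvPolynomial (Fin 3) K,
      a.IsHomogeneous 1 ∧ b.IsHomogeneous 1 ∧ c.IsHomogeneous 1 ∧ f = a * b * c := by
  obtain ⟨l, hl, hl0, hdvd⟩ := hasLinearFactor_of_det_hessian_eq hf ht
  obtain ⟨q, hq, rfl⟩ := exists_isHomogeneous_eq_mul_of_dvd (n := 2) hl hf hdvd
  set d := 4 * (hessianAt q 0).det
  set r := 2 * (gradientAt l 0 ⬝ᵥ (hessianAt q 0).adjugate *ᵥ gradientAt l 0)
  have hidentity : C d * l ^ 2 = C (t + r) * q := by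
    apply mul_left_cancel₀ hl0
    rw [det_hessian_linear_mul_quadratic hl hq] at ht
    rw [C_add]
    linear_combination ht
  by_cases htr : t + r = 0
  · have hd : d = 0 := by simpa [htr, hl0] using hidentity
    have : NeZero (2 : K) := ⟨two_ne_zero_of_neZero_six⟩
    have hfour : (4 : K) ≠ 0 := by
      rw [← two_add_two_eq_four, ← two_mul]
      exact mul_ne_zero two_ne_zero two_ne_zero
    have hdet : (hessianAt q 0).det = 0 := (mul_eq_zero.mp hd).resolve_left hfour
    obtain ⟨b, c, hb, hc, rfl⟩ := exists_eq_mul_of_det_hessianAt_eq_zero hq hdet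
    exact ⟨l, b, c, hl, hb, hc, (mul_assoc l b c).symm⟩
  · have hq_eq : q = C ((t + r)⁻¹ * d) * l ^ 2 := by
      rw [C_mul, mul_assoc, hidentity, ← mul_assoc, ← C_mul, inv_mul_cancel₀ htr, C_1, one_mul]
    exact ⟨l, C ((t + r)⁻¹ * d) * l, l, hl, hl.C_mul _, hl, by rw [hq_eq]; ring⟩

end HessianMultiple

theorem stmt0_general {K : Type*} [Field K] [IsAlgClosed K] [NeZero (6 : K)]
    {f : MvPolynomial (Fin 3) K} (hf : f.IsHomogeneous 3) :
    (∃ a b c : MvPolynomial (Fin 3) K,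
      a.IsHomogeneous 1 ∧ b.IsHomogeneous 1 ∧ c.IsHomogeneous 1 ∧ f = a * b * c) ↔
      ∃ t : K, (hessian f).det = C t * f := by
  constructor
  · rintro ⟨a, b, c, ha, hb, hc, rfl⟩
    exact exists_det_hessian_eq_of_isHomogeneous_one ha hb hc
  · rintro ⟨t, ht⟩
    exact exists_eq_mul_mul_of_det_hessian_eq hf ht

theorem stmt0 (f : MvPolynomial (Fin 3) ℂ) (hf : f.IsHomogeneous 3) :
    CompletelyReducible f ↔ ∃ t : ℂ, hessianDet f = C t * f := by
  have : NeZero (6 : ℂ) := ⟨by norm_num⟩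
  exact stmt0_general hf
end

section
/- Let f be a ternary cubic form over ℂ. Then f = a·b² for some linear forms a, b if and only if for all y, z ∈ ℂ³ the restriction of f to the line through y and z, i.e. the binary cubic p(s,t) = f(s·y + t·z) = c₃s³ + c₂s²t + c₁st² + c₀t³, has vanishing discriminant c₂²c₁² − 4c₃c₁³ − 4c₂³c₀ + 18c₃c₂c₁c₀ − 27c₃²c₀² = 0. -/
open MvPolynomial

/-- The restriction of a ternary form `f` to the line through `y` and `z`:
the binary form `p(s,t) = f(s·y + t·z)` in the two variables `s = X 0`, `t = X 1`. -/
noncomputable def lineRestrict (f : MvPolynomial (Fin 3) ℂ) (y z : Fin 3 → ℂ) :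
    MvPolynomial (Fin 2) ℂ :=
  aeval (fun i : Fin 3 => C (y i) * X 0 + C (z i) * X 1) f

/-- The discriminant `c₂²c₁² − 4c₃c₁³ − 4c₂³c₀ + 18c₃c₂c₁c₀ − 27c₃²c₀²` of a binary
cubic `c₃s³ + c₂s²t + c₁st² + c₀t³`. -/
noncomputable def binCubicDisc (p : MvPolynomial (Fin 2) ℂ) : ℂ :=
  let c₃ := p.coeff (Finsupp.single 0 3)
  let c₂ := p.coeff (Finsupp.single 0 2 + Finsupp.single 1 1)
  let c₁ := p.coeff (Finsupp.single 0 1 + Finsupp.single 1 2)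
  let c₀ := p.coeff (Finsupp.single 1 3)
  c₂ ^ 2 * c₁ ^ 2 - 4 * c₃ * c₁ ^ 3 - 4 * c₂ ^ 3 * c₀ + 18 * c₃ * c₂ * c₁ * c₀ -
    27 * c₃ ^ 2 * c₀ ^ 2

/-!
Fix `y` with `f(y) ≠ 0` and let `z = (x₁, …, xₙ)` be the vector of indeterminates. The restriction
of `f` to the line through `y` and `z` is then a binary cubic `(a, b, c, d)` over the polynomial
ring, whose coefficients `a = f(y)`, `b`, `c`, `d = f` are forms of degree `0, 1, 2, 3`. Put
`A = b² - 3ac` and `B = 2b³ - 9abc + 27a²d`. The syzygy `B² + 27a² disc = 4A³` shows that `B² = 4A³`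
once the discriminant vanishes. As the polynomial ring is integrally closed, `B = A w` with
`w² = 4A`, so `w` is a linear form, and `108 a² f = (b + w)(2b - w)²`.
-/

section Homogeneous

variable {σ R : Type*}

lemma eval_piSingle_one_eq_coeff [DecidableEq σ] [CommSemiring R] {p : MvPolynomial σ R} {n : ℕ}
    (hp : p.IsHomogeneous n) (i : σ) :
    eval (Pi.single i 1) p = coeff (Finsupp.single i n) p := by
  have vanish_of_ne : ∀ d ∈ p.support, d ≠ Finsupp.single i n →
      coeff d p * ∏ j ∈ d.support, (Pi.single i 1 : σ → R) j ^ d j = 0 := by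
    intro d hd hne
    obtain ⟨j, hj, hji⟩ : ∃ j ∈ d.support, j ≠ i := by
      by_contra! hsupp
      have hd_single : d = Finsupp.single i (d i) :=
        Finsupp.support_subset_singleton.mp fun j hj => Finset.mem_singleton.mpr (hsupp j hj)
      have hdeg : d.degree = n := not_imp_comm.mp hp.coeff_eq_zero (mem_support_iff.mp hd)
      rw [hd_single, Finsupp.degree_single] at hdeg
      exact hne (hdeg ▸ hd_single)
    have hfactor : (Pi.single i 1 : σ → R) j ^ d j = 0 := by
      rw [Pi.single_eq_of_ne hji, zero_pow (Finsupp.mem_support_iff.mp hj)]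
    rw [Finset.prod_eq_zero hj hfactor, mul_zero]
  have eval_single : ∏ j ∈ (Finsupp.single i n).support,
      (Pi.single i 1 : σ → R) j ^ Finsupp.single i n j = 1 :=
    Finset.prod_eq_one fun j hj => by
      rw [Finset.mem_singleton.mp (Finsupp.support_single_subset hj), Pi.single_eq_same, one_pow]
  rw [eval_eq, Finset.sum_eq_single _ vanish_of_ne, eval_single, mul_one]
  intro hn
  rw [notMem_support_iff.mp hn, zero_mul]

lemma exists_eq_C_mul_X_add_of_isHomogeneous_one [CommSemiring R] {p : MvPolynomial (Fin 2) R}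
    (hp : p.IsHomogeneous 1) : ∃ α β : R, p = C α * X 0 + C β * X 1 := by
  rw [← mem_homogeneousSubmodule, homogeneousSubmodule_one_eq_span_X,
    Submodule.mem_span_range_iff_exists_fun] at hp
  obtain ⟨c, rfl⟩ := hp
  exact ⟨c 0, c 1, by simp only [Fin.sum_univ_two, smul_eq_C_mul]⟩

/-- The polynomial `f(T x)` in a new variable `T`, whose coefficients are the homogeneous
components of `f`. -/
noncomputable def scaleVars [CommSemiring R] :
    MvPolynomial σ R →ₐ[R] Polynomial (MvPolynomial σ R) :=
  aeval fun i => Polynomial.C (X i) * Polynomial.X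

lemma scaleVars_monomial [CommSemiring R] (d : σ →₀ ℕ) (r : R) :
    scaleVars (monomial d r) = Polynomial.monomial d.degree (monomial d r) := by
  rw [scaleVars, aeval_monomial, ← Polynomial.C_mul_X_pow_eq_monomial, monomial_eq]
  simp only [Finsupp.prod, mul_pow, Finset.prod_mul_distrib, Finset.prod_pow_eq_pow_sum,
    ← Finsupp.degree_apply, map_mul, map_prod, map_pow, mul_assoc]
  rfl

lemma coeff_scaleVars [CommSemiring R] (p : MvPolynomial σ R) (n : ℕ) :
    (scaleVars p).coeff n = homogeneousComponent n p := by
  induction p using MvPolynomial.induction_on' with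
  | monomial d r =>
    classical
    rw [scaleVars_monomial, Polynomial.coeff_monomial,
      homogeneousComponent_of_mem (isHomogeneous_monomial r rfl)]
    simp only [eq_comm]
  | add p q hp hq => simp only [map_add, Polynomial.coeff_add, hp, hq]

lemma scaleVars_eq_monomial [CommSemiring R] {p : MvPolynomial σ R} {n : ℕ}
    (hp : p.IsHomogeneous n) : scaleVars p = Polynomial.monomial n p := by
  classical
  ext1 k
  rw [coeff_scaleVars, homogeneousComponent_of_mem hp, Polynomial.coeff_monomial]
  simp only [eq_comm]

lemma isHomogeneous_of_sq [CommRing R] [IsDomain R] {w : MvPolynomial σ R} {n : ℕ}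
    (hw : (w ^ 2).IsHomogeneous (n * 2)) : w.IsHomogeneous n := by
  have hsq : scaleVars w ^ 2 = Polynomial.monomial n w ^ 2 := by
    rw [← map_pow, scaleVars_eq_monomial hw, Polynomial.monomial_pow]
  have hcomp := homogeneousComponent_isHomogeneous n w
  rw [← coeff_scaleVars] at hcomp
  -- Thus `w(T x) = ± Tⁿ w(x)`, so `w` is its own component of degree `n` up to sign.
  rcases sq_eq_sq_iff_eq_or_eq_neg.mp hsq with h | h
  · simpa [h] using hcomp
  · simpa [h] using hcomp.neg

section CoefficientDegrees

variable [CommSemiring R] {τ : Type*} {j : τ}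

lemma isHomogeneous_coeff_monomial {r : MvPolynomial σ R} {k : τ →₀ ℕ}
    (hr : r.IsHomogeneous (k j)) (m : τ →₀ ℕ) : (coeff m (monomial k r)).IsHomogeneous (m j) := by
  classical
  rw [coeff_monomial]
  split_ifs with hm
  · exact hm ▸ hr
  · exact isHomogeneous_zero _ _ _

lemma isHomogeneous_coeff_mul {p q : MvPolynomial τ (MvPolynomial σ R)}
    (hp : ∀ m, (coeff m p).IsHomogeneous (m j)) (hq : ∀ m, (coeff m q).IsHomogeneous (m j))
    (m : τ →₀ ℕ) : (coeff m (p * q)).IsHomogeneous (m j) := by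
  classical
  rw [coeff_mul]
  refine IsHomogeneous.sum _ _ _ fun k hk => ?_
  rw [← Finset.HasAntidiagonal.mem_antidiagonal.mp hk, Finsupp.add_apply]
  exact (hp k.1).mul (hq k.2)

end CoefficientDegrees

end Homogeneous

section Discriminant

variable {R S : Type*} [CommRing R] [CommRing S]

lemma discr_map (φ : R →+* S) (P : Cubic R) : (P.map φ).discr = φ P.discr := by
  simp only [Cubic.discr, Cubic.map, map_add, map_sub, map_mul, map_pow, map_ofNat]

lemma cubic_covariant_syzygy (P : Cubic R) :
    (2 * P.b ^ 3 - 9 * P.a * P.b * P.c + 27 * P.a ^ 2 * P.d) ^ 2 + 27 * P.a ^ 2 * P.discr =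
      4 * (P.b ^ 2 - 3 * P.a * P.c) ^ 3 := by
  rw [Cubic.discr]
  ring

lemma exists_sq_eq_and_eq_mul_of_sq_eq_mul_cube [IsDomain R] [IsIntegrallyClosed R] {A B r : R}
    (h : B ^ 2 = r * A ^ 3) : ∃ w, w ^ 2 = r * A ∧ B = A * w := by
  obtain rfl | hA := eq_or_ne A 0
  · exact ⟨0, by simp, by simpa using h⟩
  have hdvd : A ^ 2 ∣ B ^ 2 := ⟨r * A, by rw [h]; ring⟩
  obtain ⟨w, rfl⟩ := (IsIntegrallyClosed.pow_dvd_pow_iff two_ne_zero).mp hdvd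
  refine ⟨w, mul_left_cancel₀ (pow_ne_zero 2 hA) ?_, rfl⟩
  linear_combination h

lemma exists_factorization_of_discr_eq_zero [IsDomain R] [IsIntegrallyClosed R] {P : Cubic R}
    (hP : P.discr = 0) :
    ∃ w, w ^ 2 = 4 * (P.b ^ 2 - 3 * P.a * P.c) ∧
      108 * P.a ^ 2 * P.d = (P.b + w) * (2 * P.b - w) ^ 2 := by
  have hsyz := cubic_covariant_syzygy P
  rw [hP, mul_zero, add_zero] at hsyz
  obtain ⟨w, hw, hB⟩ := exists_sq_eq_and_eq_mul_of_sq_eq_mul_cube hsyz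
  exact ⟨w, hw, by linear_combination 4 * hB + (3 * P.b - w) * hw⟩

end Discriminant

section BinaryCubic

variable {R S : Type*}

/-- The coefficients `(c₃, c₂, c₁, c₀)` of the binary cubic `c₃s³ + c₂s²t + c₁st² + c₀t³` with
`s = X 0` and `t = X 1`, as a `Cubic`; monomials of other degrees are ignored. -/
noncomputable def binaryCubic [CommSemiring R] (p : MvPolynomial (Fin 2) R) : Cubic R where
  a := p.coeff (Finsupp.single 0 3)
  b := p.coeff (Finsupp.single 0 2 + Finsupp.single 1 1)
  c := p.coeff (Finsupp.single 0 1 + Finsupp.single 1 2)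
  d := p.coeff (Finsupp.single 1 3)

lemma binCubicDisc_eq_discr_binaryCubic (p : MvPolynomial (Fin 2) ℂ) :
    binCubicDisc p = (binaryCubic p).discr := by
  simp only [binCubicDisc, binaryCubic, Cubic.discr]
  ring

lemma binaryCubic_map [CommSemiring R] [CommSemiring S] (φ : R →+* S)
    (p : MvPolynomial (Fin 2) R) : binaryCubic (map φ p) = (binaryCubic p).map φ := by
  simp only [binaryCubic, Cubic.map, coeff_map]

lemma binaryCubic_sum_monomial [CommSemiring R] (a b c d : R) :
    binaryCubic (C a * X 0 ^ 3 + C b * (X 0 ^ 2 * X 1) + C c * (X 0 * X 1 ^ 2) + C d * X 1 ^ 3) =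
      ⟨a, b, c, d⟩ := by
  simp only [X_pow_eq_monomial]
  simp only [X, monomial_mul, C_mul_monomial]
  ext <;> simp [binaryCubic, coeff_monomial, Finsupp.ext_iff, Fin.forall_fin_two]

lemma discr_binaryCubic_mul_sq [CommRing R] {p q : MvPolynomial (Fin 2) R}
    (hp : p.IsHomogeneous 1) (hq : q.IsHomogeneous 1) :
    (binaryCubic (p * q ^ 2)).discr = 0 := by
  obtain ⟨α, β, rfl⟩ := exists_eq_C_mul_X_add_of_isHomogeneous_one hp
  obtain ⟨γ, δ, rfl⟩ := exists_eq_C_mul_X_add_of_isHomogeneous_one hq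
  have hexpand : (C α * X 0 + C β * X 1) * (C γ * X 0 + C δ * X 1 : MvPolynomial (Fin 2) R) ^ 2 =
      C (α * γ ^ 2) * X 0 ^ 3 + C (2 * α * γ * δ + β * γ ^ 2) * (X 0 ^ 2 * X 1) +
        C (α * δ ^ 2 + 2 * β * γ * δ) * (X 0 * X 1 ^ 2) + C (β * δ ^ 2) * X 1 ^ 3 := by
    simp only [map_add, map_mul, map_pow, map_ofNat]
    ring
  rw [hexpand, binaryCubic_sum_monomial, Cubic.discr]
  ring

end BinaryCubic

section Restriction

variable {σ R S : Type*} [CommSemiring R] [CommSemiring S]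

/-- The restriction `f(s·y + t·z)` of `f` to the line through `y` and `z`, in the variables
`s = X 0` and `t = X 1`. This is `lineRestrict` for any variables and coefficients; the extra
generality allows `y` and `z` to have polynomial entries. -/
noncomputable def restrictToLine (f : MvPolynomial σ R) (y z : σ → R) : MvPolynomial (Fin 2) R :=
  aeval (fun i => C (y i) * X 0 + C (z i) * X 1) f

lemma isHomogeneous_restrictToLine {f : MvPolynomial σ R} {n : ℕ} (hf : f.IsHomogeneous n)
    (y z : σ → R) : (restrictToLine f y z).IsHomogeneous n := by
  rw [← one_mul n]
  exact hf.aeval _ fun i => (isHomogeneous_C_mul_X _ _).add (isHomogeneous_C_mul_X _ _)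

lemma eval_restrictToLine (f : MvPolynomial σ R) (y z : σ → R) (s : Fin 2 → R) :
    eval s (restrictToLine f y z) = eval (s 0 • y + s 1 • z) f := by
  induction f using MvPolynomial.induction_on with
  | C r => simp [restrictToLine]
  | add p q hp hq => simp_all [restrictToLine]
  | mul_X p i hp => simp_all [restrictToLine, mul_comm]

lemma map_restrictToLine (φ : R →+* S) (f : MvPolynomial σ R) (y z : σ → R) :
    map φ (restrictToLine f y z) = restrictToLine (map φ f) (φ ∘ y) (φ ∘ z) := by
  induction f using MvPolynomial.induction_on with
  | C r => simp [restrictToLine]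
  | add p q hp hq => simp_all [restrictToLine]
  | mul_X p i hp => simp_all [restrictToLine]

lemma coeff_single_zero_restrictToLine {f : MvPolynomial σ R} {n : ℕ} (hf : f.IsHomogeneous n)
    (y z : σ → R) : coeff (Finsupp.single 0 n) (restrictToLine f y z) = eval y f := by
  rw [← eval_piSingle_one_eq_coeff (isHomogeneous_restrictToLine hf y z), eval_restrictToLine]
  simp

lemma coeff_single_one_restrictToLine {f : MvPolynomial σ R} {n : ℕ} (hf : f.IsHomogeneous n)
    (y z : σ → R) : coeff (Finsupp.single 1 n) (restrictToLine f y z) = eval z f := by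
  rw [← eval_piSingle_one_eq_coeff (isHomogeneous_restrictToLine hf y z), eval_restrictToLine]
  simp

/-- The restriction of `f` to the line through `y` and the generic point, whose coordinates are the
indeterminates. -/
noncomputable def genericRestriction (f : MvPolynomial σ R) (y : σ → R) :
    MvPolynomial (Fin 2) (MvPolynomial σ R) :=
  restrictToLine (map C f) (C ∘ y) X

lemma map_eval_genericRestriction (f : MvPolynomial σ R) (y z : σ → R) :
    map (eval z) (genericRestriction f y) = restrictToLine f y z := by
  have hid : (eval z).comp C = RingHom.id R := RingHom.ext fun r => eval_C r
  rw [genericRestriction, map_restrictToLine, map_map, hid, map_id]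
  congr 1 <;> funext i <;> simp

lemma coeff_single_zero_genericRestriction {f : MvPolynomial σ R} {n : ℕ}
    (hf : f.IsHomogeneous n) (y : σ → R) :
    coeff (Finsupp.single 0 n) (genericRestriction f y) = C (eval y f) := by
  rw [genericRestriction, coeff_single_zero_restrictToLine (hf.map C), eval_map, eval₂_comp]

lemma coeff_single_one_genericRestriction {f : MvPolynomial σ R} {n : ℕ}
    (hf : f.IsHomogeneous n) (y : σ → R) :
    coeff (Finsupp.single 1 n) (genericRestriction f y) = f := by
  rw [genericRestriction, coeff_single_one_restrictToLine (hf.map C), eval_map, eval₂_eta]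

lemma isHomogeneous_coeff_genericRestriction (f : MvPolynomial σ R) (y : σ → R) {m : Fin 2 →₀ ℕ}
    {n : ℕ} (hm : m 1 = n) : (coeff m (genericRestriction f y)).IsHomogeneous n := by
  subst hm
  induction f using MvPolynomial.induction_on generalizing m with
  | C r =>
    simp only [genericRestriction, restrictToLine, map_C, aeval_C, algebraMap_eq]
    exact isHomogeneous_coeff_monomial (isHomogeneous_C σ r) m
  | add p q hp hq =>
    simpa only [genericRestriction, restrictToLine, map_add, coeff_add] using hp.add hq
  | mul_X p i hp =>
    simp only [genericRestriction, restrictToLine, map_mul, map_X, aeval_X]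
    refine isHomogeneous_coeff_mul (fun _ => hp) (fun k => ?_) m
    simp only [Function.comp_apply, C_mul_X_eq_monomial, coeff_add]
    exact (isHomogeneous_coeff_monomial (by simpa using isHomogeneous_C σ (y i)) k).add
      (isHomogeneous_coeff_monomial (by simpa using isHomogeneous_X R i) k)

end Restriction

section Factorization

variable {σ K : Type*}

lemma discr_genericRestriction_eq_zero [CommRing K] [IsDomain K] [Infinite K]
    {f : MvPolynomial σ K} {y : σ → K}
    (hdiscr : ∀ z, (binaryCubic (restrictToLine f y z)).discr = 0) :
    (binaryCubic (genericRestriction f y)).discr = 0 :=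
  MvPolynomial.funext fun z => by
    rw [← discr_map, ← binaryCubic_map, map_eval_genericRestriction, hdiscr, map_zero]

lemma exists_eq_mul_sq_of_discr_eq_zero [Field K] [Infinite K] [NeZero (2 : K)] [NeZero (3 : K)]
    {f : MvPolynomial σ K} (hf : f.IsHomogeneous 3) {y : σ → K} (hy : eval y f ≠ 0)
    (hdiscr : ∀ z, (binaryCubic (restrictToLine f y z)).discr = 0) :
    ∃ a b : MvPolynomial σ K, a.IsHomogeneous 1 ∧ b.IsHomogeneous 1 ∧ f = a * b ^ 2 := by
  obtain ⟨w, hw, hfactor⟩ :=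
    exists_factorization_of_discr_eq_zero (discr_genericRestriction_eq_zero hdiscr)
  set P := binaryCubic (genericRestriction f y)
  have ha : P.a = C (eval y f) := coeff_single_zero_genericRestriction hf y
  have hb : P.b.IsHomogeneous 1 := isHomogeneous_coeff_genericRestriction f y (by simp)
  have hc : P.c.IsHomogeneous 2 := isHomogeneous_coeff_genericRestriction f y (by simp)
  have hd : P.d = f := coeff_single_one_genericRestriction hf y
  have hw_linear : w.IsHomogeneous 1 := by
    refine isHomogeneous_of_sq ?_
    rw [hw, ha, ← map_ofNat C 3, ← map_ofNat C 4, ← C_mul]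
    exact ((hb.pow 2).sub (hc.C_mul _)).C_mul 4
  have hscale_ne : (108 * eval y f ^ 2 : K) ≠ 0 := by
    have hfactorization : (108 : K) = 2 ^ 2 * 3 ^ 3 := by norm_num
    rw [hfactorization]
    exact mul_ne_zero (mul_ne_zero (pow_ne_zero 2 two_ne_zero) (pow_ne_zero 3 three_ne_zero))
      (pow_ne_zero 2 hy)
  refine ⟨C (108 * eval y f ^ 2)⁻¹ * (P.b + w), C 2 * P.b - w, (hb.add hw_linear).C_mul _,
    (hb.C_mul 2).sub hw_linear, ?_⟩
  have hscaled : C (108 * eval y f ^ 2) * f = (P.b + w) * (C 2 * P.b - w) ^ 2 := by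
    simpa only [ha, hd, map_mul, map_pow, map_ofNat] using hfactor
  rw [mul_assoc, ← hscaled, ← mul_assoc, ← C_mul, inv_mul_cancel₀ hscale_ne, C_1, one_mul]

end Factorization

theorem stmt7_general {σ K : Type*} [Field K] [Infinite K] [NeZero (2 : K)] [NeZero (3 : K)]
    (f : MvPolynomial σ K) (hf : f.IsHomogeneous 3) :
    (∃ a b : MvPolynomial σ K, a.IsHomogeneous 1 ∧ b.IsHomogeneous 1 ∧ f = a * b ^ 2) ↔
      ∀ y z : σ → K, (binaryCubic (restrictToLine f y z)).discr = 0 := by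
  constructor
  · rintro ⟨a, b, ha, hb, rfl⟩ y z
    rw [restrictToLine, map_mul, map_pow]
    exact discr_binaryCubic_mul_sq (isHomogeneous_restrictToLine ha y z)
      (isHomogeneous_restrictToLine hb y z)
  · intro hdiscr
    obtain rfl | hf₀ := eq_or_ne f 0
    · exact ⟨0, 0, isHomogeneous_zero _ _ _, isHomogeneous_zero _ _ _, by simp⟩
    obtain ⟨y, hy⟩ : ∃ y, eval y f ≠ 0 := by
      contrapose! hf₀
      exact MvPolynomial.funext fun y => by rw [hf₀ y, map_zero]
    exact exists_eq_mul_sq_of_discr_eq_zero hf hy (hdiscr y)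

theorem stmt7 (f : MvPolynomial (Fin 3) ℂ) (hf : f.IsHomogeneous 3) :
    (∃ a b : MvPolynomial (Fin 3) ℂ, IsLinearForm a ∧ IsLinearForm b ∧ f = a * b ^ 2) ↔
      ∀ y z : Fin 3 → ℂ, binCubicDisc (lineRestrict f y z) = 0 := by
  simp only [binCubicDisc_eq_discr_binaryCubic]
  exact stmt7_general f hf
end
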